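/- Basis dual to monomials: define G_{k,γ} = (-1)^k ∂^k u_γ / [k]_q! where u_γ = g₁/∫_γ g₁ and g₁(x) = e_{q²}(-x²) ₀φ₁(-; q³; q², -q³x²). Then μ_{r,γ}(G_{k,γ}) = δ_{r,k}, consequently ∫_γ G_{k,γ}(x) x^l d_qx = q^{-(k²+k)/2} δ_{k,l}, and G_{k,γ} *_γ G_{l,γ} = [k+l choose l]_q G_{k+l,γ}. -/

import Mathlib

open scoped BigOperators

noncomputable section

/-- finite q-Pochhammer symbol `(a;q)_k` -/
def qPoch (q a : ℝ) (k : ℕ) : ℝ := ∏ j ∈ Finset.range k, (1 - a * q ^ j)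

/-- infinite q-Pochhammer symbol `(a;q)_∞` -/
def qPochInf (q a : ℝ) : ℝ := ∏' j : ℕ, (1 - a * q ^ j)

/-- q-integral over the lattice `L(γ) = {± q^k γ}` -/
def qInt (q γ : ℝ) (f : ℝ → ℝ) : ℝ :=
  (1 - q) * ∑' k : ℤ, (q ^ k * γ) * (f (q ^ k * γ) + f (-(q ^ k * γ)))

/-- k-th q-moment -/
def qMoment (q γ : ℝ) (e : ℕ) (f : ℝ → ℝ) : ℝ :=
  q ^ (e * (e + 1) / 2) * qInt q γ (fun x => f x * x ^ e)

/-- k-th strict q-moment -/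
def qNu (q γ : ℝ) (e : ℕ) (f : ℝ → ℝ) : ℝ :=
  q ^ (e * (e + 1) / 2) * qInt q γ (fun x => |f x * x ^ e|)

/-- q-derivative -/
def qDeriv (q : ℝ) (f : ℝ → ℝ) : ℝ → ℝ := fun x => (f x - f (q * x)) / ((1 - q) * x)

/-- q-factorial `[e]_q!` -/
def qFact (q : ℝ) (e : ℕ) : ℝ := qPoch q q e / (1 - q) ^ e

/-- q-binomial coefficient -/
def qBinom (q : ℝ) (n k : ℕ) : ℝ := qPoch q q n / (qPoch q q k * qPoch q q (n - k))

/-- q-convolution -/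
def qConv (q γ : ℝ) (f g : ℝ → ℝ) : ℝ → ℝ :=
  fun x => ∑' e : ℕ, (-1) ^ e * qMoment q γ e f / qFact q e * (qDeriv q)^[e] g x

/-- the q-Gaussian `e_{q²}(-x²)` -/
def qGauss (q : ℝ) : ℝ → ℝ := fun x => 1 / qPochInf (q ^ 2) (-(x ^ 2))

/-- discrete q-Hermite II polynomials -/
def qHermiteII (q : ℝ) (k : ℕ) (x : ℝ) : ℝ :=
  qPoch q q k * ∑ l ∈ Finset.range (k / 2 + 1),
    (-1) ^ l * q ^ (2 * l ^ 2 + l) / q ^ (2 * l * k) * x ^ (k - 2 * l) /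
      (qPoch (q ^ 2) (q ^ 2) l * qPoch q q (k - 2 * l))

/-- discrete delta function on the lattice, supported at `η γ q^p` -/
def qdelta (q γ η : ℝ) (p : ℤ) : ℝ → ℝ := fun x => if x = η * γ * q ^ p then 1 else 0

/-- `g₁(x) = e_{q²}(-x²) ₀φ₁(-; q³; q², -q³x²)` -/
def gOne (q : ℝ) : ℝ → ℝ := fun x =>
  qGauss q x * ∑' r : ℕ, (-1) ^ r * q ^ (2 * r ^ 2 + r) * x ^ (2 * r) /
    (qPoch (q ^ 2) (q ^ 3) r * qPoch (q ^ 2) (q ^ 2) r)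

/-- `u_γ = g₁ / ∫_γ g₁` -/
def uGamma (q γ : ℝ) : ℝ → ℝ := fun x => gOne q x / qInt q γ (gOne q)

/-- `G_{k,γ} = (-1)^k ∂^k u_γ / [k]_q!` -/
def Gk (q γ : ℝ) (k : ℕ) : ℝ → ℝ :=
  fun x => (-1) ^ k * (qDeriv q)^[k] (uGamma q γ) x / qFact q k

/-!
When `g₁ = e_{q²}(-x²) ₀φ₁(-; q³; q², -q³ x²)` is integrated against `x ^ (2 * k)` term by term, the
moments of the `q`-Gaussian turn the `₀φ₁` series into a `₁φ₁` series, which Cauchy's formula sums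
to a multiple of `(q ^ (2 - 2 * k); q²)_∞`. This product vanishes for `k ≥ 1`, and the odd moments
vanish by parity, so the moments of `u_γ` are those of a unit mass at `0`. A `q`-derivative shifts
moments by one (`q`-integration by parts, without boundary terms because `u_γ` decays rapidly and is
analytic at `0`), which gives the duality of `G_{k,γ}` with the monomials. Convolution with
`G_{k,γ}` therefore keeps a single term, a multiple of the `k`-th `q`-derivative.
-/

open Filter Topology Asymptotics

section QPochhammer

variable {p a b : ℝ}

@[simp]
lemma qPoch_zero (p a : ℝ) : qPoch p a 0 = 1 :=
  Finset.prod_range_zero _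

@[simp]
lemma qPoch_zero_left (p : ℝ) (n : ℕ) : qPoch p 0 n = 1 := by
  simp [qPoch]

lemma qPoch_succ (p a : ℝ) (n : ℕ) : qPoch p a (n + 1) = qPoch p a n * (1 - a * p ^ n) :=
  Finset.prod_range_succ _ _

lemma qPoch_succ' (p a : ℝ) (n : ℕ) : qPoch p a (n + 1) = (1 - a) * qPoch p (a * p) n := by
  rw [qPoch, Finset.prod_range_succ', pow_zero, mul_one, mul_comm, qPoch]
  congr 1
  refine Finset.prod_congr rfl fun j _ => ?_
  rw [pow_succ', mul_assoc]

lemma one_sub_mul_pow_pos (hp₀ : 0 ≤ p) (hp₁ : p ≤ 1) (ha : a < 1) (n : ℕ) :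
    0 < 1 - a * p ^ n := by
  have hpow₀ := pow_nonneg hp₀ n
  have hpow₁ := pow_le_one₀ hp₀ hp₁ (n := n)
  rcases le_or_gt a 0 with ha₀ | ha₀
  · linarith [mul_nonpos_of_nonpos_of_nonneg ha₀ hpow₀]
  · linarith [mul_le_of_le_one_right ha₀.le hpow₁]

lemma qPoch_pos (hp₀ : 0 ≤ p) (hp₁ : p ≤ 1) (ha : a < 1) (n : ℕ) : 0 < qPoch p a n :=
  Finset.prod_pos fun j _ => one_sub_mul_pow_pos hp₀ hp₁ ha j

lemma qPoch_anti (hp₀ : 0 ≤ p) (hp₁ : p ≤ 1) (hab : a ≤ b) (hb : b < 1) (n : ℕ) :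
    qPoch p b n ≤ qPoch p a n :=
  Finset.prod_le_prod (fun j _ => (one_sub_mul_pow_pos hp₀ hp₁ hb j).le) fun j _ =>
    sub_le_sub_left (mul_le_mul_of_nonneg_right hab (pow_nonneg hp₀ j)) 1

lemma summable_neg_mul_pow (hp₀ : 0 ≤ p) (hp₁ : p < 1) (a : ℝ) :
    Summable fun j : ℕ => -(a * p ^ j) :=
  ((summable_geometric_of_lt_one hp₀ hp₁).mul_left a).neg

lemma multipliable_one_sub_mul_pow (hp₀ : 0 ≤ p) (hp₁ : p < 1) (a : ℝ) :
    Multipliable fun j : ℕ => 1 - a * p ^ j := by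
  simpa only [sub_eq_add_neg] using
    Real.multipliable_one_add_of_summable (summable_neg_mul_pow hp₀ hp₁ a)

lemma tendsto_qPoch (hp₀ : 0 ≤ p) (hp₁ : p < 1) (a : ℝ) :
    Tendsto (qPoch p a) atTop (𝓝 (qPochInf p a)) :=
  (multipliable_one_sub_mul_pow hp₀ hp₁ a).hasProd.tendsto_prod_nat

lemma qPochInf_pos (hp₀ : 0 ≤ p) (hp₁ : p < 1) (ha : a < 1) : 0 < qPochInf p a := by
  have hlog : Summable fun j : ℕ => Real.log (1 - a * p ^ j) := by
    simpa only [sub_eq_add_neg] using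
      Real.summable_log_one_add_of_summable (summable_neg_mul_pow hp₀ hp₁ a)
  rw [qPochInf, ← Real.rexp_tsum_eq_tprod (one_sub_mul_pow_pos hp₀ hp₁.le ha) hlog]
  exact Real.exp_pos _

lemma qPochInf_eq_zero {n : ℕ} (h : a * p ^ n = 1) : qPochInf p a = 0 :=
  tprod_of_exists_eq_zero ⟨n, by rw [h, sub_self]⟩

lemma qPochInf_eq_mul (hp₀ : 0 ≤ p) (hp₁ : p < 1) (a : ℝ) :
    qPochInf p a = (1 - a) * qPochInf p (a * p) := by
  have hshift : (fun j : ℕ => 1 - a * p ^ (j + 1)) = fun j => 1 - a * p * p ^ j := by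
    funext j
    rw [pow_succ', mul_assoc]
  rw [qPochInf, tprod_eq_zero_mul', hshift, pow_zero, mul_one, qPochInf]
  rw [hshift]
  exact multipliable_one_sub_mul_pow hp₀ hp₁ (a * p)

end QPochhammer

section PhiOneOne

variable {p a c z : ℝ}

/-- The `r`-th term of the basic hypergeometric series `₁φ₁(a; c; p, z)`. -/
def phiOneOneTerm (p a c z : ℝ) (r : ℕ) : ℝ :=
  qPoch p a r / (qPoch p c r * qPoch p p r) * (p ^ r.choose 2 * (-z) ^ r)

lemma pow_choose_two_succ (p : ℝ) (r : ℕ) :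
    p ^ (r + 1).choose 2 = p ^ r.choose 2 * p ^ r := by
  rw [Nat.choose_succ_succ' r 1, Nat.choose_one_right, add_comm, pow_add]

lemma phiOneOneTerm_succ (p a c z : ℝ) (r : ℕ) :
    phiOneOneTerm p a c z (r + 1) =
      -(z * p ^ r * (1 - a * p ^ r) / ((1 - c * p ^ r) * (1 - p * p ^ r))) *
        phiOneOneTerm p a c z r := by
  simp only [phiOneOneTerm, qPoch_succ, pow_choose_two_succ, pow_succ, div_eq_mul_inv, mul_inv]
  ring

lemma summable_phiOneOneTerm (hp₀ : 0 ≤ p) (hp₁ : p < 1) (a c z : ℝ) :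
    Summable (phiOneOneTerm p a c z) := by
  have hratio : Tendsto (fun r : ℕ => ‖-(z * p ^ r * (1 - a * p ^ r) /
      ((1 - c * p ^ r) * (1 - p * p ^ r)))‖) atTop (𝓝 0) := by
    have hcont : ContinuousAt (fun y : ℝ => ‖-(z * y * (1 - a * y) /
        ((1 - c * y) * (1 - p * y)))‖) 0 := by
      fun_prop (disch := norm_num)
    simpa [ContinuousAt, Function.comp_def] using
      hcont.tendsto.comp (tendsto_pow_atTop_nhds_zero_of_lt_one hp₀ hp₁)
  refine summable_of_ratio_norm_eventually_le (r := 2⁻¹) (by norm_num) ?_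
  filter_upwards [hratio.eventually_le_const (show (0 : ℝ) < 2⁻¹ by norm_num)] with r hr
  rw [phiOneOneTerm_succ, norm_mul]
  gcongr

lemma phiOneOneTerm_mul_base (hp₀ : 0 ≤ p) (hp₁ : p ≤ 1) (hc : c < 1) (a z : ℝ) (r : ℕ) :
    (1 - c * p ^ r) * phiOneOneTerm p a (c * p) (z * p) r =
      (1 - c) * p ^ r * phiOneOneTerm p a c z r := by
  have hpoch : qPoch p c r * (1 - c * p ^ r) = (1 - c) * qPoch p (c * p) r := by
    rw [← qPoch_succ, qPoch_succ']
  have hfactor := (one_sub_mul_pow_pos hp₀ hp₁ hc r).ne'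
  have hc₀ : 1 - c ≠ 0 := (sub_pos.2 hc).ne'
  have hpoch₀ := (qPoch_pos hp₀ hp₁ hc r).ne'
  rw [phiOneOneTerm, phiOneOneTerm, ← neg_mul, mul_pow,
    eq_div_of_mul_eq hc₀ ((mul_comm _ _).trans hpoch.symm)]
  field_simp

lemma one_sub_mul_tsum_phiOneOneTerm (hp₀ : 0 ≤ p) (hp₁ : p < 1) (haz : a * z < 1) :
    (1 - a * z) * ∑' r, phiOneOneTerm p a (a * z) z r =
      (1 - z) * ∑' r, phiOneOneTerm p a (a * (z * p)) (z * p) r := by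
  set t := phiOneOneTerm p a (a * z) z
  set t' := phiOneOneTerm p a (a * (z * p)) (z * p)
  have ht : Summable t := summable_phiOneOneTerm hp₀ hp₁ _ _ _
  have ht' : Summable t' := summable_phiOneOneTerm hp₀ hp₁ _ _ _
  let u : ℕ → ℝ := fun r => (1 - a * z) * (1 - p ^ r) * t r
  have hu_sub : ∀ r, (1 - a * z) * t r - (1 - z) * t' r = u r - u (r + 1) := fun r => by
    have hfactor := (one_sub_mul_pow_pos hp₀ hp₁.le haz r).ne'
    have hfactor' : 1 - p ^ (r + 1) ≠ 0 := by
      simpa only [pow_succ'] using (one_sub_mul_pow_pos hp₀ hp₁.le hp₁ r).ne'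
    have hbase : t' r = (1 - a * z) * p ^ r * t r / (1 - a * z * p ^ r) := by
      rw [eq_div_iff hfactor, mul_comm, ← phiOneOneTerm_mul_base hp₀ hp₁.le haz, mul_assoc a z p]
    have hsucc : t (r + 1) = -(z * p ^ r * (1 - a * p ^ r) /
        ((1 - a * z * p ^ r) * (1 - p ^ (r + 1)))) * t r := by
      simpa only [pow_succ'] using phiOneOneTerm_succ p a (a * z) z r
    simp only [u, hbase, hsucc]
    field_simp
    ring
  have hu : Summable u := by
    refine ((ht.sub (summable_phiOneOneTerm hp₀ hp₁ a (a * z) (z * p))).mul_left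
      (1 - a * z)).congr fun r => ?_
    simp only [u, t, phiOneOneTerm, ← neg_mul, mul_pow]
    ring
  rw [← sub_eq_zero, ← tsum_mul_left, ← tsum_mul_left,
    ← (ht.mul_left _).tsum_sub (ht'.mul_left _), tsum_congr hu_sub,
    hu.tsum_sub ((summable_nat_add_iff 1).2 hu), hu.tsum_eq_zero_add]
  simp [u]

lemma qPoch_mul_tsum_phiOneOneTerm (hp₀ : 0 ≤ p) (hp₁ : p < 1) (haz₀ : 0 ≤ a * z)
    (haz : a * z < 1) (n : ℕ) :
    qPoch p (a * z) n * ∑' r, phiOneOneTerm p a (a * z) z r =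
      qPoch p z n * ∑' r, phiOneOneTerm p a (a * (z * p ^ n)) (z * p ^ n) r := by
  induction n with
  | zero => simp
  | succ n ih =>
    have hlt : a * (z * p ^ n) < 1 := by
      rw [← mul_assoc]
      exact (mul_le_of_le_one_right haz₀ (pow_le_one₀ hp₀ hp₁.le)).trans_lt haz
    have hstep := one_sub_mul_tsum_phiOneOneTerm hp₀ hp₁ hlt
    rw [qPoch_succ, qPoch_succ, pow_succ, ← mul_assoc z]
    rw [← mul_assoc] at hstep ih
    linear_combination (1 - a * z * p ^ n) * ih + qPoch p z n * hstep

lemma tendsto_tsum_phiOneOneTerm (hp₀ : 0 ≤ p) (hp₁ : p < 1) (haz₀ : 0 ≤ a * z)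
    (haz : a * z < 1) :
    Tendsto (fun n : ℕ => ∑' r, phiOneOneTerm p a (a * (z * p ^ n)) (z * p ^ n) r)
      atTop (𝓝 1) := by
  have hlim : ∀ r, Tendsto (fun n : ℕ => phiOneOneTerm p a (a * (z * p ^ n)) (z * p ^ n) r)
      atTop (𝓝 (phiOneOneTerm p a 0 0 r)) := fun r => by
    have hcont : ContinuousAt (fun y => phiOneOneTerm p a (a * (z * y)) (z * y) r) 0 := by
      have hpoch : ContinuousAt (fun y => qPoch p (a * (z * y)) r) 0 :=
        (continuous_finsetProd _ fun j _ => by fun_prop).continuousAt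
      have hpoch₀ : qPoch p (a * (z * 0)) r * qPoch p p r ≠ 0 := by
        simpa using (qPoch_pos hp₀ hp₁.le hp₁ r).ne'
      unfold phiOneOneTerm
      fun_prop (disch := exact hpoch₀)
    simpa [ContinuousAt, Function.comp_def] using
      hcont.tendsto.comp (tendsto_pow_atTop_nhds_zero_of_lt_one hp₀ hp₁)
  have hsum : ∑' r, phiOneOneTerm p a 0 0 r = 1 := by
    rw [tsum_eq_single 0 fun r hr => by simp [phiOneOneTerm, hr]]
    simp [phiOneOneTerm]
  rw [← hsum]
  refine tendsto_tsum_of_dominated_convergence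
    (summable_phiOneOneTerm hp₀ hp₁ a (a * z) z).norm hlim (.of_forall fun n r => ?_)
  have hpow := pow_le_one₀ hp₀ hp₁.le (n := n)
  have hle : a * (z * p ^ n) ≤ a * z := by
    rw [← mul_assoc]
    exact mul_le_of_le_one_right haz₀ hpow
  have hpoch₀ := qPoch_pos hp₀ hp₁.le haz r
  have hpoch := qPoch_anti hp₀ hp₁.le hle haz r
  have hpoch_p := qPoch_pos hp₀ hp₁.le hp₁ r
  have hz : ‖-(z * p ^ n)‖ ≤ ‖-z‖ := by
    rw [norm_neg, norm_neg, norm_mul, Real.norm_of_nonneg (pow_nonneg hp₀ n)]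
    exact mul_le_of_le_one_right (norm_nonneg z) hpow
  simp only [phiOneOneTerm, norm_mul, norm_div, norm_pow, Real.norm_of_nonneg hpoch_p.le,
    Real.norm_of_nonneg hpoch₀.le, Real.norm_of_nonneg (hpoch₀.le.trans hpoch)]
  gcongr

/-- Cauchy's `₁φ₁` summation. -/
theorem tsum_phiOneOneTerm (hp₀ : 0 ≤ p) (hp₁ : p < 1) (haz₀ : 0 ≤ a * z) (haz : a * z < 1) :
    ∑' r, phiOneOneTerm p a (a * z) z r = qPochInf p z / qPochInf p (a * z) := by
  have hleft := (tendsto_qPoch hp₀ hp₁ (a * z)).mul_const (∑' r, phiOneOneTerm p a (a * z) z r)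
  have hright := (tendsto_qPoch hp₀ hp₁ z).mul (tendsto_tsum_phiOneOneTerm hp₀ hp₁ haz₀ haz)
  rw [mul_one] at hright
  rw [eq_div_iff (qPochInf_pos hp₀ hp₁ haz).ne', mul_comm]
  refine tendsto_nhds_unique (hleft.congr fun n => ?_) hright
  exact qPoch_mul_tsum_phiOneOneTerm hp₀ hp₁ haz₀ haz n

end PhiOneOne

section PowerSeries

lemma analyticAt_tsum_mul_pow {𝕜 : Type*} [RCLike 𝕜] {c : ℕ → 𝕜}
    (hc : ∀ x : 𝕜, Summable fun r => c r * x ^ r) (x : 𝕜) :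
    AnalyticAt 𝕜 (fun y => ∑' r, c r * y ^ r) x := by
  have hradius : (FormalMultilinearSeries.ofScalars 𝕜 c).radius = ⊤ :=
    FormalMultilinearSeries.radius_eq_top_of_summable_norm _ fun r => by
      refine (hc ((r : ℝ) : 𝕜)).norm.congr fun n => ?_
      simp
  have hball := (FormalMultilinearSeries.ofScalars 𝕜 c).hasFPowerSeriesOnBall
    (by rw [hradius]; exact ENNReal.zero_lt_top)
  refine (hball.analyticAt_of_mem (y := x) (by simp [hradius])).congr (.of_forall fun y => ?_)
  simp [FormalMultilinearSeries.sum, mul_comm]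

variable {p : ℝ}

/-- The `r`-th coefficient of Euler's expansion of `(x; p)_∞` in powers of `-x`. -/
def eulerCoeff (p : ℝ) (r : ℕ) : ℝ :=
  p ^ r.choose 2 / qPoch p p r

lemma eulerCoeff_mul_pow (p x : ℝ) (r : ℕ) :
    eulerCoeff p r * (-x) ^ r = phiOneOneTerm p 0 0 x r := by
  rw [eulerCoeff, phiOneOneTerm, qPoch_zero_left]
  ring

lemma hasSum_qPochInf (hp₀ : 0 ≤ p) (hp₁ : p < 1) (x : ℝ) :
    HasSum (fun r => eulerCoeff p r * (-x) ^ r) (qPochInf p x) := by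
  have hsum : ∑' r, phiOneOneTerm p 0 0 x r = qPochInf p x := by
    simpa [qPochInf] using tsum_phiOneOneTerm (a := 0) (z := x) hp₀ hp₁ (by simp) (by simp)
  simpa only [eulerCoeff_mul_pow, hsum] using (summable_phiOneOneTerm hp₀ hp₁ 0 0 x).hasSum

lemma eulerCoeff_pos (hp₀ : 0 < p) (hp₁ : p < 1) (r : ℕ) : 0 < eulerCoeff p r :=
  div_pos (pow_pos hp₀ _) (qPoch_pos hp₀.le hp₁.le hp₁ r)

lemma analyticAt_qPochInf (hp₀ : 0 ≤ p) (hp₁ : p < 1) (x : ℝ) : AnalyticAt ℝ (qPochInf p) x := by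
  have hsummable : ∀ y, Summable fun r => eulerCoeff p r * y ^ r := fun y => by
    simpa using (hasSum_qPochInf hp₀ hp₁ (-y)).summable
  have hcomp := (analyticAt_tsum_mul_pow hsummable (-x)).fun_comp analyticAt_id.neg
  exact hcomp.congr (.of_forall fun y => (hasSum_qPochInf hp₀ hp₁ y).tsum_eq)

/-- The coefficient of `x ^ r` in `₀φ₁(-; c; p, -c x)`. -/
def phiZeroOneCoeff (p c : ℝ) (r : ℕ) : ℝ :=
  (p ^ r.choose 2) ^ 2 * (-c) ^ r / (qPoch p c r * qPoch p p r)

lemma summable_phiZeroOneCoeff_mul_pow (hp₀ : 0 ≤ p) (hp₁ : p < 1) (c x : ℝ) :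
    Summable fun r => phiZeroOneCoeff p c r * x ^ r := by
  refine .of_norm_bounded (summable_phiOneOneTerm hp₀ hp₁ 0 c (c * x)).norm fun r => ?_
  have hfactor : phiZeroOneCoeff p c r * x ^ r =
      p ^ r.choose 2 * phiOneOneTerm p 0 c (c * x) r := by
    rw [phiZeroOneCoeff, phiOneOneTerm, qPoch_zero_left, ← neg_mul, mul_pow]
    ring
  rw [hfactor, norm_mul, Real.norm_of_nonneg (pow_nonneg hp₀ _)]
  exact mul_le_of_le_one_left (norm_nonneg _) (pow_le_one₀ hp₀ hp₁.le)

/-- Integrating a `₀φ₁` series term by term against a weight whose moments `m` satisfy a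
first-order `p`-recurrence turns it into a `₁φ₁` series. -/
lemma phiZeroOneCoeff_mul_of_recurrence {a d : ℝ} {m : ℕ → ℝ} (hd : d ≠ 0)
    (hm : ∀ r, m (r + 1) * (d * p ^ r) = (1 - a * p ^ r) * m r) (c : ℝ) (r : ℕ) :
    phiZeroOneCoeff p c r * m r = m 0 * phiOneOneTerm p a c (c / d) r := by
  induction r with
  | zero => simp [phiZeroOneCoeff, phiOneOneTerm]
  | succ r ih =>
    have hcoeff : phiZeroOneCoeff p c (r + 1) = phiZeroOneCoeff p c r *
        (-(c * p ^ r * p ^ r) / ((1 - c * p ^ r) * (1 - p * p ^ r))) := by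
      simp only [phiZeroOneCoeff, qPoch_succ, pow_choose_two_succ, pow_succ, div_eq_mul_inv,
        mul_inv]
      ring
    have hm' : p ^ r * m (r + 1) = (1 - a * p ^ r) * m r / d := by
      rw [eq_div_iff hd, ← hm]
      ring
    calc phiZeroOneCoeff p c (r + 1) * m (r + 1)
        = phiZeroOneCoeff p c r * (-(c * p ^ r) / ((1 - c * p ^ r) * (1 - p * p ^ r))) *
            (p ^ r * m (r + 1)) := by rw [hcoeff]; ring
      _ = phiZeroOneCoeff p c r * m r *
            -(c / d * p ^ r * (1 - a * p ^ r) / ((1 - c * p ^ r) * (1 - p * p ^ r))) := by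
          rw [hm']; ring
      _ = m 0 * phiOneOneTerm p a c (c / d) (r + 1) := by rw [ih, phiOneOneTerm_succ]; ring

end PowerSeries

section QIntegral

variable {q γ : ℝ} {f g : ℝ → ℝ}

/-- The `k`-th term of the series defining `qInt`. -/
def qIntTerm (q γ : ℝ) (f : ℝ → ℝ) (k : ℤ) : ℝ :=
  q ^ k * γ * (f (q ^ k * γ) + f (-(q ^ k * γ)))

/-- Convergence of the series defining `qInt`; without it `qInt` has the value `0`. -/
def QIntegrable (q γ : ℝ) (f : ℝ → ℝ) : Prop :=
  Summable (qIntTerm q γ f)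

lemma qInt_eq_tsum (q γ : ℝ) (f : ℝ → ℝ) : qInt q γ f = (1 - q) * ∑' k, qIntTerm q γ f k :=
  rfl

lemma lattice_ne_zero (hq : q ≠ 0) (hγ : γ ≠ 0) (k : ℤ) : q ^ k * γ ≠ 0 :=
  mul_ne_zero (zpow_ne_zero k hq) hγ

lemma qInt_congr (hq : q ≠ 0) (hγ : γ ≠ 0) (h : ∀ x, x ≠ 0 → f x = g x) :
    qInt q γ f = qInt q γ g := by
  simp only [qInt, h _ (lattice_ne_zero hq hγ _), h _ (neg_ne_zero.2 (lattice_ne_zero hq hγ _))]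

lemma qIntegrable_congr (hq : q ≠ 0) (hγ : γ ≠ 0) (h : ∀ x, x ≠ 0 → f x = g x) :
    QIntegrable q γ f ↔ QIntegrable q γ g := by
  refine summable_congr fun k => ?_
  simp only [qIntTerm, h _ (lattice_ne_zero hq hγ _), h _ (neg_ne_zero.2 (lattice_ne_zero hq hγ _))]

lemma qIntTerm_const_mul (c : ℝ) (f : ℝ → ℝ) (k : ℤ) :
    qIntTerm q γ (fun x => c * f x) k = c * qIntTerm q γ f k := by
  simp only [qIntTerm]
  ring

lemma qIntTerm_sub (f g : ℝ → ℝ) (k : ℤ) :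
    qIntTerm q γ (fun x => f x - g x) k = qIntTerm q γ f k - qIntTerm q γ g k := by
  simp only [qIntTerm]
  ring

lemma qIntTerm_comp_mul (hq : q ≠ 0) (f : ℝ → ℝ) (k : ℤ) :
    qIntTerm q γ (fun x => f (q * x)) k = q⁻¹ * qIntTerm q γ f (k + 1) := by
  have hsucc : q ^ (k + 1) * γ = q * (q ^ k * γ) := by
    rw [zpow_add_one₀ hq]
    ring
  simp only [qIntTerm, hsucc, mul_neg]
  field_simp

lemma qInt_const_mul (c : ℝ) (f : ℝ → ℝ) : qInt q γ (fun x => c * f x) = c * qInt q γ f := by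
  simp only [qInt_eq_tsum, qIntTerm_const_mul, tsum_mul_left]
  ring

lemma qInt_sub (hf : QIntegrable q γ f) (hg : QIntegrable q γ g) :
    qInt q γ (fun x => f x - g x) = qInt q γ f - qInt q γ g := by
  simp only [qInt_eq_tsum, qIntTerm_sub, hf.tsum_sub hg, mul_sub]

lemma qInt_comp_mul (hq : q ≠ 0) (f : ℝ → ℝ) :
    qInt q γ (fun x => f (q * x)) = q⁻¹ * qInt q γ f := by
  have hshift := (Equiv.addRight (1 : ℤ)).tsum_eq (qIntTerm q γ f)
  simp only [Equiv.coe_addRight] at hshift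
  simp only [qInt_eq_tsum, qIntTerm_comp_mul hq, tsum_mul_left, hshift]
  ring

lemma QIntegrable.const_mul (hf : QIntegrable q γ f) (c : ℝ) :
    QIntegrable q γ fun x => c * f x :=
  (hf.mul_left c).congr fun k => (qIntTerm_const_mul c f k).symm

lemma QIntegrable.comp_mul (hq : q ≠ 0) (hf : QIntegrable q γ f) :
    QIntegrable q γ fun x => f (q * x) :=
  (((Equiv.addRight (1 : ℤ)).summable_iff.2 hf).mul_left q⁻¹).congr fun k =>
    (qIntTerm_comp_mul hq f k).symm

lemma qInt_eq_zero_of_odd (hf : ∀ x, f (-x) = -f x) : qInt q γ f = 0 := by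
  simp [qInt, hf]

lemma qIntTerm_eq_mul (q γ : ℝ) (f : ℝ → ℝ) (k : ℤ) :
    qIntTerm q γ f k = γ * (q ^ k * (f (q ^ k * γ) + f (-(q ^ k * γ)))) := by
  rw [qIntTerm]
  ring

lemma qInt_ne_zero_of_pos (hq₀ : 0 < q) (hq₁ : q < 1) (hγ : γ ≠ 0) (hf : QIntegrable q γ f)
    (hpos : ∀ x, 0 < f x) : qInt q γ f ≠ 0 := by
  have hterm : ∀ k : ℤ, 0 < q ^ k * (f (q ^ k * γ) + f (-(q ^ k * γ))) := fun k =>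
    mul_pos (zpow_pos hq₀ k) (add_pos (hpos _) (hpos _))
  have hsum := (summable_mul_left_iff hγ).1 (hf.congr (qIntTerm_eq_mul q γ f))
  rw [qInt_eq_tsum, tsum_congr (qIntTerm_eq_mul q γ f), tsum_mul_left]
  exact mul_ne_zero (sub_pos.2 hq₁).ne'
    (mul_ne_zero hγ (hsum.tsum_pos (fun k => (hterm k).le) 0 (hterm 0)).ne')

lemma tsum_abs_qIntTerm (hq₀ : 0 ≤ q) (hf : ∀ x, 0 ≤ f x) :
    ∑' k, |qIntTerm q γ f k| = |∑' k, qIntTerm q γ f k| := by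
  have hterm : ∀ k : ℤ, 0 ≤ q ^ k * (f (q ^ k * γ) + f (-(q ^ k * γ))) := fun k =>
    mul_nonneg (zpow_nonneg hq₀ k) (add_nonneg (hf _) (hf _))
  simp only [qIntTerm_eq_mul, tsum_mul_left, abs_mul γ, abs_of_nonneg (tsum_nonneg hterm),
    abs_of_nonneg (hterm _)]

lemma qInt_tsum_mul (hq₀ : 0 ≤ q) (hq₁ : q ≠ 1) {c : ℕ → ℝ} {w : ℕ → ℝ → ℝ}
    (hw₀ : ∀ r x, 0 ≤ w r x) (hw : ∀ r, QIntegrable q γ (w r))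
    (hpoint : ∀ x, Summable fun r => c r * w r x)
    (hint : Summable fun r => c r * qInt q γ (w r)) :
    qInt q γ (fun x => ∑' r, c r * w r x) = ∑' r, c r * qInt q γ (w r) := by
  have hq : 1 - q ≠ 0 := sub_ne_zero.2 hq₁.symm
  have hsum : Summable fun x : ℕ × ℤ => c x.1 * qIntTerm q γ (w x.1) x.2 := by
    rw [← summable_abs_iff, summable_prod_of_nonneg fun _ => abs_nonneg _]
    simp only [abs_mul, tsum_mul_left, tsum_abs_qIntTerm hq₀ (hw₀ _)]
    refine ⟨fun r => (hw r).abs.mul_left _, (hint.mul_left (1 - q)⁻¹).abs.congr fun r => ?_⟩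
    rw [← abs_mul, qInt_eq_tsum]
    congr 1
    field_simp
  have hterm : ∀ k, qIntTerm q γ (fun x => ∑' r, c r * w r x) k =
      ∑' r, c r * qIntTerm q γ (w r) k := fun k => by
    rw [qIntTerm, ← (hpoint _).tsum_add (hpoint _), ← tsum_mul_left]
    refine tsum_congr fun r => ?_
    rw [qIntTerm]
    ring
  rw [qInt_eq_tsum, tsum_congr hterm, hsum.tsum_comm, ← tsum_mul_left]
  refine tsum_congr fun r => ?_
  rw [tsum_mul_left, qInt_eq_tsum, mul_left_comm]

lemma qInt_qDeriv_mul_pow (hq : q ≠ 0) (hγ : γ ≠ 0) {n : ℕ}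
    (hf : QIntegrable q γ fun x => f x * x ^ n / x) :
    qInt q γ (fun x => qDeriv q f x * x ^ n) =
      (1 - (q ^ n)⁻¹) / (1 - q) * qInt q γ fun x => f x * x ^ n / x := by
  set h : ℝ → ℝ := fun x => f x * x ^ n / x
  have hderiv : ∀ x, x ≠ 0 →
      qDeriv q f x * x ^ n = (1 - q)⁻¹ * (h x - q / q ^ n * h (q * x)) := fun x hx => by
    simp only [qDeriv, h, mul_pow]
    field_simp
  rw [qInt_congr hq hγ hderiv, qInt_const_mul,
    qInt_sub hf ((QIntegrable.comp_mul hq hf).const_mul _), qInt_const_mul, qInt_comp_mul hq]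
  field_simp

end QIntegral

section QSchwartz

variable {q γ : ℝ} {f : ℝ → ℝ}

/-- The functions to which `q`-integration by parts applies indefinitely: those that decay faster
than every power at infinity and agree near `0` with an analytic function. The value at `0` itself
is left free, because `qDeriv q f 0` is a junk value. -/
structure QSchwartz (f : ℝ → ℝ) : Prop where
  near_zero : ∃ F : ℝ → ℝ, AnalyticAt ℝ F 0 ∧ f =ᶠ[𝓝[≠] 0] F
  decay : ∀ n : ℕ, f =O[Bornology.cobounded ℝ] fun x => (x ^ n)⁻¹

lemma tendsto_mul_left_nhdsNE_zero (hq : q ≠ 0) : Tendsto (q * ·) (𝓝[≠] 0) (𝓝[≠] 0) := by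
  refine tendsto_nhdsWithin_iff.2 ⟨?_, ?_⟩
  · exact ((continuous_const_mul q).tendsto' 0 0 (mul_zero q)).mono_left nhdsWithin_le_nhds
  · filter_upwards [self_mem_nhdsWithin] with x hx using mul_ne_zero hq hx

lemma tendsto_neg_nhdsNE_zero : Tendsto (-· : ℝ → ℝ) (𝓝[≠] 0) (𝓝[≠] 0) := by
  simpa using tendsto_mul_left_nhdsNE_zero (q := -1) (by norm_num)

lemma summable_lattice (hq₀ : 0 < q) (hq₁ : q < 1) (hγ : γ ≠ 0) {φ : ℝ → ℝ}
    (hzero : φ =O[𝓝[≠] 0] fun x => x)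
    (hinfty : φ =O[Bornology.cobounded ℝ] fun x => x⁻¹) :
    Summable fun k : ℤ => φ (q ^ k * γ) := by
  have hgeom := summable_geometric_of_lt_one hq₀.le hq₁
  have hmul : Tendsto (· * γ) (𝓝[≠] 0) (𝓝[≠] 0) := by
    simpa only [mul_comm] using tendsto_mul_left_nhdsNE_zero hγ
  have hpow : Tendsto (fun n : ℕ => q ^ n) atTop (𝓝[≠] 0) :=
    tendsto_nhdsWithin_iff.2 ⟨tendsto_pow_atTop_nhds_zero_of_lt_one hq₀.le hq₁,
      .of_forall fun n => pow_ne_zero n hq₀.ne'⟩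
  have hpow_inv : Tendsto (fun n : ℕ => (q ^ n)⁻¹ * γ) atTop (Bornology.cobounded ℝ) :=
    (tendsto_mul_right_cobounded hγ).comp (tendsto_inv₀_nhdsNE_zero.comp hpow)
  refine .of_nat_of_neg ?_ ?_
  · simpa only [zpow_natCast, Function.comp_def] using
      summable_of_isBigO_nat (hgeom.mul_right γ) (hzero.comp_tendsto (hmul.comp hpow))
  · simpa only [zpow_neg, zpow_natCast, Function.comp_def] using
      summable_of_isBigO_nat (hgeom.mul_right γ⁻¹)
        ((hinfty.comp_tendsto hpow_inv).congr_right fun n => by simp [mul_comm])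

namespace QSchwartz

lemma const_mul (hf : QSchwartz f) (c : ℝ) : QSchwartz fun x => c * f x := by
  obtain ⟨F, hF, hfF⟩ := hf.near_zero
  exact ⟨⟨fun x => c * F x, analyticAt_const.mul hF, hfF.mono fun x hx => by simp only [hx]⟩,
    fun n => (hf.decay n).const_mul_left c⟩

lemma mul_pow (hf : QSchwartz f) (m : ℕ) : QSchwartz fun x => f x * x ^ m := by
  obtain ⟨F, hF, hfF⟩ := hf.near_zero
  refine ⟨⟨fun x => F x * x ^ m, hF.mul (analyticAt_id.pow m), hfF.mono fun x hx => by
    simp only [hx]⟩, fun n => ?_⟩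
  refine ((hf.decay (n + m)).mul (isBigO_refl (fun x => x ^ m) _)).congr' .rfl ?_
  filter_upwards [Bornology.eventually_ne_cobounded 0] with x hx
  rw [pow_add]
  field_simp

protected lemma qDeriv (hq : q ≠ 0) (hf : QSchwartz f) : QSchwartz (qDeriv q f) := by
  refine ⟨?_, fun n => ?_⟩
  · obtain ⟨F, hF, hfF⟩ := hf.near_zero
    set H : ℝ → ℝ := fun x => F x - F (q * x)
    have hH : AnalyticAt ℝ H 0 :=
      hF.sub (.fun_comp (by simpa using hF) (analyticAt_const.mul analyticAt_id))
    obtain ⟨P, hP⟩ := hH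
    refine ⟨fun x => (1 - q)⁻¹ * dslope H 0 x,
      analyticAt_const.mul ⟨_, hP.has_fpower_series_dslope_fslope⟩, ?_⟩
    filter_upwards [hfF, (tendsto_mul_left_nhdsNE_zero hq).eventually hfF,
      self_mem_nhdsWithin] with x hx hqx hx₀
    simp only [dslope_of_ne H hx₀, slope_def_field, H, qDeriv, hx, hqx, mul_zero, sub_self,
      sub_zero]
    rw [← div_eq_inv_mul, div_div, mul_comm x]
  · have hcomp : (fun x => f (q * x)) =O[Bornology.cobounded ℝ] fun x => (x ^ n)⁻¹ := by
      refine ((hf.decay n).comp_tendsto (tendsto_mul_left_cobounded hq)).trans ?_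
      simpa only [Function.comp_def, _root_.mul_pow, mul_inv] using
        (isBigO_refl (fun x : ℝ => (x ^ n)⁻¹) _).const_mul_left (q ^ n)⁻¹
    have hinv : (fun x => ((1 - q) * x)⁻¹) =O[Bornology.cobounded ℝ] fun _ => (1 : ℝ) := by
      simpa only [mul_inv] using
        ((tendsto_inv₀_cobounded (α := ℝ)).isBigO_one ℝ).const_mul_left (1 - q)⁻¹
    exact (((hf.decay n).sub hcomp).mul hinv).congr (fun x => (div_eq_mul_inv _ _).symm)
      fun x => mul_one _

lemma iterate_qDeriv (hq : q ≠ 0) (hf : QSchwartz f) (k : ℕ) : QSchwartz ((qDeriv q)^[k] f) := by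
  induction k with
  | zero => exact hf
  | succ k ih =>
    rw [Function.iterate_succ_apply']
    exact ih.qDeriv hq

lemma qIntegrable_div_id (hq₀ : 0 < q) (hq₁ : q < 1) (hγ : γ ≠ 0) (hf : QSchwartz f) :
    QIntegrable q γ fun x => f x / x := by
  have hzero : (fun x => f x - f (-x)) =O[𝓝[≠] 0] fun x => x := by
    obtain ⟨F, hF, hfF⟩ := hf.near_zero
    have hdiff : (fun x => F x - F 0) =O[𝓝[≠] 0] fun x => x := by
      simpa using hF.differentiableAt.isBigO_sub.mono nhdsWithin_le_nhds
    have hdiff_neg : (fun x => F (-x) - F 0) =O[𝓝[≠] 0] fun x => x := by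
      simpa [Function.comp_def] using (hdiff.comp_tendsto tendsto_neg_nhdsNE_zero).of_neg_right
    refine (hdiff.sub hdiff_neg).congr' ?_ .rfl
    filter_upwards [hfF, tendsto_neg_nhdsNE_zero.eventually hfF] with x hx hnx
    rw [hx, hnx, sub_sub_sub_cancel_right]
  have hinfty : (fun x => f x - f (-x)) =O[Bornology.cobounded ℝ] fun x => x⁻¹ := by
    have hdecay : f =O[Bornology.cobounded ℝ] fun x => x⁻¹ := by simpa using hf.decay 1
    have hdecay_neg := hdecay.comp_tendsto tendsto_neg_cobounded
    simp only [Function.comp_def, inv_neg] at hdecay_neg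
    exact hdecay.sub hdecay_neg.of_neg_right
  refine (summable_lattice hq₀ hq₁ hγ hzero hinfty).congr fun k => ?_
  rw [qIntTerm, div_neg, ← sub_eq_add_neg, ← sub_div,
    mul_div_cancel₀ _ (lattice_ne_zero hq₀.ne' hγ k)]

lemma qIntegrable_mul_pow (hq₀ : 0 < q) (hq₁ : q < 1) (hγ : γ ≠ 0) (hf : QSchwartz f) (n : ℕ) :
    QIntegrable q γ fun x => f x * x ^ n := by
  refine (qIntegrable_congr hq₀.ne' hγ fun x hx => ?_).1
    ((hf.mul_pow (n + 1)).qIntegrable_div_id hq₀ hq₁ hγ)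
  rw [pow_succ, ← mul_assoc, mul_div_cancel_right₀ _ hx]

lemma qMoment_zero_qDeriv (hq₀ : 0 < q) (hq₁ : q < 1) (hγ : γ ≠ 0) (hf : QSchwartz f) :
    qMoment q γ 0 (qDeriv q f) = 0 := by
  rw [qMoment, qInt_qDeriv_mul_pow hq₀.ne' hγ ((hf.mul_pow 0).qIntegrable_div_id hq₀ hq₁ hγ)]
  simp

lemma qMoment_succ_qDeriv (hq₀ : 0 < q) (hq₁ : q < 1) (hγ : γ ≠ 0) (hf : QSchwartz f) (r : ℕ) :
    qMoment q γ (r + 1) (qDeriv q f) = -((1 - q ^ (r + 1)) / (1 - q)) * qMoment q γ r f := by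
  have hexp : (r + 1) * (r + 1 + 1) / 2 = r * (r + 1) / 2 + (r + 1) := by
    rw [show (r + 1) * (r + 1 + 1) = r * (r + 1) + (r + 1) * 2 by ring,
      Nat.add_mul_div_right _ _ two_pos]
  have hdiv : qInt q γ (fun x => f x * x ^ (r + 1) / x) = qInt q γ fun x => f x * x ^ r :=
    qInt_congr hq₀.ne' hγ fun x hx => by
      rw [pow_succ, ← mul_assoc, mul_div_cancel_right₀ _ hx]
  have hq := hq₀.ne'
  rw [qMoment, qMoment, hexp, pow_add,
    qInt_qDeriv_mul_pow hq hγ ((hf.mul_pow (r + 1)).qIntegrable_div_id hq₀ hq₁ hγ), hdiv]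
  field_simp
  ring

end QSchwartz

end QSchwartz

section QMoment

variable {q γ : ℝ} {u : ℝ → ℝ}

lemma qMoment_const_mul (c : ℝ) (f : ℝ → ℝ) (r : ℕ) :
    qMoment q γ r (fun x => c * f x) = c * qMoment q γ r f := by
  simp only [qMoment, mul_assoc, qInt_const_mul]
  ring

lemma qFact_succ (q : ℝ) (k : ℕ) :
    qFact q (k + 1) = (1 - q ^ (k + 1)) / (1 - q) * qFact q k := by
  rw [qFact, qFact, qPoch_succ, pow_succ' (1 - q), pow_succ' q, mul_comm (qPoch q q k),
    mul_div_mul_comm]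

lemma qFact_pos (hq₀ : 0 ≤ q) (hq₁ : q < 1) (k : ℕ) : 0 < qFact q k :=
  div_pos (qPoch_pos hq₀ hq₁.le hq₁ k) (pow_pos (sub_pos.2 hq₁) k)

lemma QSchwartz.qMoment_iterate_qDeriv (hq₀ : 0 < q) (hq₁ : q < 1) (hγ : γ ≠ 0)
    (hu : QSchwartz u) (hmoment : ∀ r, qMoment q γ r u = if r = 0 then 1 else 0) (r k : ℕ) :
    qMoment q γ r ((qDeriv q)^[k] u) = if r = k then (-1) ^ k * qFact q k else 0 := by
  induction k generalizing r with
  | zero => simp [hmoment, qFact]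
  | succ k ih =>
    have hk := hu.iterate_qDeriv hq₀.ne' k
    rw [Function.iterate_succ_apply']
    cases r with
    | zero => rw [hk.qMoment_zero_qDeriv hq₀ hq₁ hγ, if_neg k.succ_ne_zero.symm]
    | succ r =>
      rw [hk.qMoment_succ_qDeriv hq₀ hq₁ hγ, ih, qFact_succ]
      by_cases hrk : r = k
      · subst hrk
        simp only [if_true]
        ring
      · simp [hrk]

end QMoment

section Gaussian

variable {q γ : ℝ}

lemma qGauss_neg (q x : ℝ) : qGauss q (-x) = qGauss q x := by
  simp only [qGauss, neg_sq]

lemma qPochInf_neg_sq_pos (hq₀ : 0 ≤ q) (hq₁ : q < 1) (x : ℝ) : 0 < qPochInf (q ^ 2) (-(x ^ 2)) :=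
  qPochInf_pos (sq_nonneg q) (pow_lt_one₀ hq₀ hq₁ two_ne_zero)
    ((neg_nonpos.2 (sq_nonneg x)).trans_lt one_pos)

lemma qGauss_pos (hq₀ : 0 ≤ q) (hq₁ : q < 1) (x : ℝ) : 0 < qGauss q x :=
  one_div_pos.2 (qPochInf_neg_sq_pos hq₀ hq₁ x)

lemma qGauss_mul (hq₀ : 0 ≤ q) (hq₁ : q < 1) (x : ℝ) :
    qGauss q (q * x) = (1 + x ^ 2) * qGauss q x := by
  have hpos : 0 < 1 + x ^ 2 := by positivity
  rw [qGauss, qGauss, qPochInf_eq_mul (sq_nonneg q) (pow_lt_one₀ hq₀ hq₁ two_ne_zero) (-(x ^ 2)),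
    sub_neg_eq_add, show -(x ^ 2) * q ^ 2 = -((q * x) ^ 2) by ring, mul_one_div,
    div_mul_cancel_left₀ hpos.ne', one_div]

lemma analyticAt_qGauss (hq₀ : 0 ≤ q) (hq₁ : q < 1) (x : ℝ) : AnalyticAt ℝ (qGauss q) x :=
  analyticAt_const.div
    (.fun_comp (analyticAt_qPochInf (sq_nonneg q) (pow_lt_one₀ hq₀ hq₁ two_ne_zero) _)
      (analyticAt_id.pow 2).neg) (qPochInf_neg_sq_pos hq₀ hq₁ x).ne'

lemma qGauss_mul_pow_le (hq₀ : 0 < q) (hq₁ : q < 1) (n : ℕ) (x : ℝ) :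
    qGauss q x * (x ^ 2) ^ n ≤ (eulerCoeff (q ^ 2) n)⁻¹ := by
  have hp₁ : q ^ 2 < 1 := pow_lt_one₀ hq₀.le hq₁ two_ne_zero
  have heuler := hasSum_qPochInf (sq_nonneg q) hp₁ (-(x ^ 2))
  simp only [neg_neg] at heuler
  have hcoeff := eulerCoeff_pos (pow_pos hq₀ 2) hp₁
  have hterm : eulerCoeff (q ^ 2) n * (x ^ 2) ^ n ≤ qPochInf (q ^ 2) (-(x ^ 2)) :=
    le_hasSum heuler n fun r _ => mul_nonneg (hcoeff r).le (by positivity)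
  rw [qGauss, one_div_mul_eq_div, ← one_div, div_le_div_iff₀ (qPochInf_neg_sq_pos hq₀.le hq₁ x)
    (hcoeff n), one_mul, mul_comm]
  exact hterm

lemma eulerCoeff_succ_inv_mul {p : ℝ} (hp : p ≠ 0) (n : ℕ) :
    (eulerCoeff p (n + 1))⁻¹ * p ^ n = (1 - p * p ^ n) * (eulerCoeff p n)⁻¹ := by
  have hpow := pow_ne_zero n hp
  simp only [eulerCoeff, qPoch_succ, pow_choose_two_succ, inv_div]
  field_simp

lemma QSchwartz.of_bound {f : ℝ → ℝ} (hf : AnalyticAt ℝ f 0)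
    (hbound : ∀ n : ℕ, ∃ C, ∀ x, |f x| * (x ^ 2) ^ n ≤ C) : QSchwartz f := by
  refine ⟨⟨f, hf, .rfl⟩, fun n => ?_⟩
  obtain ⟨C, hC⟩ := hbound n
  refine .of_bound C ?_
  filter_upwards [eventually_cobounded_le_norm 1] with x hx
  have hx₀ : 0 < ‖x‖ ^ n := pow_pos (one_pos.trans_le hx) n
  rw [norm_inv, norm_pow, ← div_eq_mul_inv, le_div_iff₀ hx₀]
  refine le_trans ?_ (hC x)
  rw [← sq_abs, ← pow_mul]
  exact mul_le_mul_of_nonneg_left (pow_le_pow_right₀ hx (by omega)) (abs_nonneg _)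

lemma qSchwartz_qGauss (hq₀ : 0 < q) (hq₁ : q < 1) : QSchwartz (qGauss q) := by
  refine .of_bound (analyticAt_qGauss hq₀.le hq₁ 0) fun n =>
    ⟨(eulerCoeff (q ^ 2) n)⁻¹, fun x => ?_⟩
  rw [abs_of_pos (qGauss_pos hq₀.le hq₁ x)]
  exact qGauss_mul_pow_le hq₀ hq₁ n x

lemma qIntegrable_qGauss_mul_pow (hq₀ : 0 < q) (hq₁ : q < 1) (hγ : γ ≠ 0) (n : ℕ) :
    QIntegrable q γ fun x => qGauss q x * (x ^ 2) ^ n := by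
  simpa only [pow_mul] using (qSchwartz_qGauss hq₀ hq₁).qIntegrable_mul_pow hq₀ hq₁ hγ (2 * n)

lemma qInt_qGauss_mul_pow_succ (hq₀ : 0 < q) (hq₁ : q < 1) (hγ : γ ≠ 0) (n : ℕ) :
    qInt q γ (fun x => qGauss q x * (x ^ 2) ^ (n + 1)) * (q * (q ^ 2) ^ n) =
      (1 - q * (q ^ 2) ^ n) * qInt q γ fun x => qGauss q x * (x ^ 2) ^ n := by
  set h : ℝ → ℝ := fun x => qGauss q x * (x ^ 2) ^ n
  have hh : QIntegrable q γ h := qIntegrable_qGauss_mul_pow hq₀ hq₁ hγ n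
  have hpow := pow_ne_zero n (pow_ne_zero 2 hq₀.ne')
  have hrec : (fun x => qGauss q x * (x ^ 2) ^ (n + 1)) =
      fun x => ((q ^ 2) ^ n)⁻¹ * h (q * x) - h x := by
    funext x
    simp only [h, qGauss_mul hq₀.le hq₁, mul_pow]
    field_simp
    ring
  have hq := hq₀.ne'
  rw [hrec, qInt_sub ((hh.comp_mul hq).const_mul _) hh, qInt_const_mul, qInt_comp_mul hq]
  field_simp

end Gaussian

section GFamily

variable {q γ c : ℝ}

/-- The function `e_{q²}(-x²) ₀φ₁(-; c; q², -c x²)`, which is `g_m` for `c = q ^ (2 * m + 1)`. -/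
def gFamily (q c x : ℝ) : ℝ :=
  qGauss q x * ∑' r, phiZeroOneCoeff (q ^ 2) c r * (x ^ 2) ^ r

lemma gOne_eq_gFamily (q : ℝ) : gOne q = gFamily q (q ^ 3) := by
  have hexp : ∀ r : ℕ, 2 * r ^ 2 + r = 2 * (r.choose 2) * 2 + 3 * r := fun r => by
    induction r with
    | zero => rfl
    | succ r ih =>
      rw [Nat.choose_succ_succ' r 1, Nat.choose_one_right]
      linarith
  funext x
  rw [gOne, gFamily]
  congr 1
  refine tsum_congr fun r => ?_
  rw [phiZeroOneCoeff, hexp, pow_add, pow_mul q (2 * _), pow_mul q 2, pow_mul q 3, pow_mul x,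
    ← neg_one_mul (q ^ 3), mul_pow]
  ring

lemma gFamily_neg (q c x : ℝ) : gFamily q c (-x) = gFamily q c x := by
  simp only [gFamily, qGauss_neg, neg_sq]

lemma summable_phiZeroOneCoeff_mul_eulerCoeff_inv (hq₀ : 0 < q) (hq₁ : q < 1) (c : ℝ) (n : ℕ) :
    Summable fun r => phiZeroOneCoeff (q ^ 2) c r * (eulerCoeff (q ^ 2) (n + r))⁻¹ := by
  have hp : q ^ 2 ≠ 0 := pow_ne_zero 2 hq₀.ne'
  have hrec : ∀ r, (eulerCoeff (q ^ 2) (n + (r + 1)))⁻¹ * ((q ^ 2) ^ n * (q ^ 2) ^ r) =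
      (1 - (q ^ 2) ^ (n + 1) * (q ^ 2) ^ r) * (eulerCoeff (q ^ 2) (n + r))⁻¹ := fun r => by
    have h := eulerCoeff_succ_inv_mul hp (n + r)
    rw [pow_add] at h
    rw [pow_succ' (q ^ 2), mul_assoc (q ^ 2)]
    exact h
  refine ((summable_phiOneOneTerm (sq_nonneg q) (pow_lt_one₀ hq₀.le hq₁ two_ne_zero) _ _ _).mul_left
    _).congr fun r => (phiZeroOneCoeff_mul_of_recurrence
      (m := fun r => (eulerCoeff (q ^ 2) (n + r))⁻¹) (pow_ne_zero n hp) hrec c r).symm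

lemma qSchwartz_gFamily (hq₀ : 0 < q) (hq₁ : q < 1) (c : ℝ) : QSchwartz (gFamily q c) := by
  have hanalytic : AnalyticAt ℝ (gFamily q c) 0 :=
    (analyticAt_qGauss hq₀.le hq₁ 0).mul (.fun_comp (analyticAt_tsum_mul_pow
      (summable_phiZeroOneCoeff_mul_pow (sq_nonneg q) (pow_lt_one₀ hq₀.le hq₁ two_ne_zero) c) _)
        (analyticAt_id.pow 2))
  refine .of_bound hanalytic fun n =>
    ⟨∑' r, ‖phiZeroOneCoeff (q ^ 2) c r * (eulerCoeff (q ^ 2) (n + r))⁻¹‖, fun x => ?_⟩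
  have hsum := (summable_phiZeroOneCoeff_mul_eulerCoeff_inv hq₀ hq₁ c n).norm.hasSum
  have hseries : gFamily q c x * (x ^ 2) ^ n =
      ∑' r, phiZeroOneCoeff (q ^ 2) c r * (qGauss q x * (x ^ 2) ^ (n + r)) := by
    rw [gFamily, mul_right_comm, ← tsum_mul_left]
    refine tsum_congr fun r => ?_
    ring
  rw [← abs_of_nonneg (pow_nonneg (sq_nonneg x) n), ← abs_mul, hseries, ← Real.norm_eq_abs]
  refine tsum_of_norm_bounded hsum fun r => ?_
  have hweight : 0 ≤ qGauss q x * (x ^ 2) ^ (n + r) :=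
    mul_nonneg (qGauss_pos hq₀.le hq₁ x).le (by positivity)
  have hbound := qGauss_mul_pow_le hq₀ hq₁ (n + r) x
  rw [norm_mul, norm_mul _ (eulerCoeff (q ^ 2) (n + r))⁻¹, Real.norm_of_nonneg hweight,
    Real.norm_of_nonneg (hweight.trans hbound)]
  gcongr

lemma qInt_gFamily_mul_pow (hq₀ : 0 < q) (hq₁ : q < 1) (hγ : γ ≠ 0) (hc₀ : 0 ≤ c) (hc₁ : c < 1)
    (k : ℕ) :
    qInt q γ (fun x => gFamily q c x * (x ^ 2) ^ k) =
      qInt q γ (fun x => qGauss q x * (x ^ 2) ^ k) *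
        (qPochInf (q ^ 2) (c / (q * (q ^ 2) ^ k)) / qPochInf (q ^ 2) c) := by
  have hp₁ : q ^ 2 < 1 := pow_lt_one₀ hq₀.le hq₁ two_ne_zero
  set a := q * (q ^ 2) ^ k
  have ha : a ≠ 0 := by positivity
  set m : ℕ → ℝ := fun r => qInt q γ fun x => qGauss q x * (x ^ 2) ^ (k + r)
  have hm : ∀ r, m (r + 1) * (a * (q ^ 2) ^ r) = (1 - a * (q ^ 2) ^ r) * m r := fun r => by
    have h := qInt_qGauss_mul_pow_succ hq₀ hq₁ hγ (k + r)
    rw [pow_add (q ^ 2), ← mul_assoc q] at h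
    exact h
  have hmoment := phiZeroOneCoeff_mul_of_recurrence ha hm c
  have hseries : ∀ x, gFamily q c x * (x ^ 2) ^ k =
      ∑' r, phiZeroOneCoeff (q ^ 2) c r * (qGauss q x * (x ^ 2) ^ (k + r)) := fun x => by
    rw [gFamily, mul_right_comm, ← tsum_mul_left]
    refine tsum_congr fun r => ?_
    ring
  have hcauchy : ∑' r, phiOneOneTerm (q ^ 2) a c (c / a) r =
      qPochInf (q ^ 2) (c / a) / qPochInf (q ^ 2) c := by
    have hac : a * (c / a) = c := mul_div_cancel₀ c ha
    simpa only [hac] using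
      tsum_phiOneOneTerm (a := a) (z := c / a) (sq_nonneg q) hp₁ (hac.symm ▸ hc₀) (hac.symm ▸ hc₁)
  simp only [hseries]
  rw [qInt_tsum_mul hq₀.le hq₁.ne, tsum_congr hmoment, tsum_mul_left, hcauchy]
  · rfl
  · exact fun r x => mul_nonneg (qGauss_pos hq₀.le hq₁ x).le (by positivity)
  · exact fun r => qIntegrable_qGauss_mul_pow hq₀ hq₁ hγ (k + r)
  · intro x
    refine ((summable_phiZeroOneCoeff_mul_pow (sq_nonneg q) hp₁ c (x ^ 2)).mul_left
      (qGauss q x * (x ^ 2) ^ k)).congr fun r => ?_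
    ring
  · exact ((summable_phiOneOneTerm (sq_nonneg q) hp₁ a c (c / a)).mul_left (m 0)).congr
      fun r => (hmoment r).symm

end GFamily

section Normalization

variable {q γ : ℝ}

lemma qInt_gOne_ne_zero (hq₀ : 0 < q) (hq₁ : q < 1) (hγ : γ ≠ 0) : qInt q γ (gOne q) ≠ 0 := by
  have hp₁ : q ^ 2 < 1 := pow_lt_one₀ hq₀.le hq₁ two_ne_zero
  have hc₁ : q ^ 3 < 1 := pow_lt_one₀ hq₀.le hq₁ three_ne_zero
  have hint := qInt_gFamily_mul_pow hq₀ hq₁ hγ (pow_nonneg hq₀.le 3) hc₁ 0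
  have hgauss : QIntegrable q γ (qGauss q) := by
    simpa using qIntegrable_qGauss_mul_pow hq₀ hq₁ hγ 0
  have hratio : q ^ 3 / q = q ^ 2 := by
    rw [pow_succ, mul_div_cancel_right₀ _ hq₀.ne']
  simp only [pow_zero, mul_one, hratio] at hint
  rw [gOne_eq_gFamily, hint]
  exact mul_ne_zero (qInt_ne_zero_of_pos hq₀ hq₁ hγ hgauss (qGauss_pos hq₀.le hq₁))
    (div_pos (qPochInf_pos (sq_nonneg q) hp₁ hp₁) (qPochInf_pos (sq_nonneg q) hp₁ hc₁)).ne'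

lemma qInt_gOne_mul_pow_succ (hq₀ : 0 < q) (hq₁ : q < 1) (hγ : γ ≠ 0) (r : ℕ) :
    qInt q γ (fun x => gOne q x * x ^ (r + 1)) = 0 := by
  rw [gOne_eq_gFamily]
  rcases Nat.even_or_odd (r + 1) with ⟨j, hj⟩ | hodd
  · obtain ⟨i, rfl⟩ : ∃ i, j = i + 1 := Nat.exists_eq_succ_of_ne_zero (by omega)
    have hzero : q ^ 3 / (q * (q ^ 2) ^ (i + 1)) * (q ^ 2) ^ i = 1 := by
      field_simp
      ring
    simp only [hj, ← two_mul, pow_mul]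
    rw [qInt_gFamily_mul_pow hq₀ hq₁ hγ (pow_nonneg hq₀.le 3)
      (pow_lt_one₀ hq₀.le hq₁ three_ne_zero), qPochInf_eq_zero hzero, zero_div, mul_zero]
  · refine qInt_eq_zero_of_odd fun x => ?_
    rw [gFamily_neg, hodd.neg_pow, mul_neg]

lemma uGamma_eq (q γ : ℝ) : uGamma q γ = fun x => (qInt q γ (gOne q))⁻¹ * gOne q x := by
  funext x
  rw [uGamma, div_eq_inv_mul]

lemma qSchwartz_uGamma (hq₀ : 0 < q) (hq₁ : q < 1) (γ : ℝ) : QSchwartz (uGamma q γ) := by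
  rw [uGamma_eq, gOne_eq_gFamily]
  exact (qSchwartz_gFamily hq₀ hq₁ (q ^ 3)).const_mul _

lemma qMoment_uGamma (hq₀ : 0 < q) (hq₁ : q < 1) (hγ : γ ≠ 0) (r : ℕ) :
    qMoment q γ r (uGamma q γ) = if r = 0 then 1 else 0 := by
  rw [uGamma_eq, qMoment_const_mul]
  cases r with
  | zero => simp [qMoment, inv_mul_cancel₀ (qInt_gOne_ne_zero hq₀ hq₁ hγ)]
  | succ r =>
    rw [qMoment, qInt_gOne_mul_pow_succ hq₀ hq₁ hγ, mul_zero, mul_zero, if_neg r.succ_ne_zero]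

end Normalization

section DualBasis

variable {q γ : ℝ}

lemma Gk_eq (q γ : ℝ) (k : ℕ) :
    Gk q γ k = fun x => (-1) ^ k / qFact q k * (qDeriv q)^[k] (uGamma q γ) x := by
  funext x
  rw [Gk, div_mul_eq_mul_div]

lemma qMoment_Gk (hq₀ : 0 < q) (hq₁ : q < 1) (hγ : γ ≠ 0) (r k : ℕ) :
    qMoment q γ r (Gk q γ k) = if r = k then 1 else 0 := by
  have hsign : (-1 : ℝ) ^ k * (-1) ^ k = 1 := by
    rw [← mul_pow, neg_one_mul, neg_neg, one_pow]
  have hfact := (qFact_pos hq₀.le hq₁ k).ne'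
  rw [Gk_eq, qMoment_const_mul,
    (qSchwartz_uGamma hq₀ hq₁ γ).qMoment_iterate_qDeriv hq₀ hq₁ hγ (qMoment_uGamma hq₀ hq₁ hγ),
    mul_ite, mul_zero, mul_comm ((-1) ^ k) (qFact q k), ← mul_assoc, div_mul_cancel₀ _ hfact,
    hsign]

lemma qInt_Gk_mul_pow (hq₀ : 0 < q) (hq₁ : q < 1) (hγ : γ ≠ 0) (k l : ℕ) :
    qInt q γ (fun x => Gk q γ k x * x ^ l) =
      if k = l then (q ^ (k * (k + 1) / 2))⁻¹ else 0 := by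
  have hmoment := qMoment_Gk hq₀ hq₁ hγ l k
  rw [qMoment, ← eq_inv_mul_iff_mul_eq₀ (pow_ne_zero _ hq₀.ne')] at hmoment
  rw [hmoment]
  rcases eq_or_ne k l with rfl | hkl
  · rw [if_pos rfl, if_pos rfl, mul_one]
  · rw [if_neg hkl, if_neg hkl.symm, mul_zero]

lemma iterate_qDeriv_const_mul (q c : ℝ) (f : ℝ → ℝ) (k : ℕ) :
    (qDeriv q)^[k] (fun x => c * f x) = fun x => c * (qDeriv q)^[k] f x := by
  induction k with
  | zero => rfl
  | succ k ih =>
    rw [Function.iterate_succ_apply', Function.iterate_succ_apply', ih]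
    funext x
    simp only [qDeriv]
    ring

lemma qConv_Gk (hq₀ : 0 < q) (hq₁ : q < 1) (hγ : γ ≠ 0) (k : ℕ) (f : ℝ → ℝ) (x : ℝ) :
    qConv q γ (Gk q γ k) f x = (-1) ^ k / qFact q k * (qDeriv q)^[k] f x := by
  simp only [qConv, qMoment_Gk hq₀ hq₁ hγ]
  rw [tsum_eq_single k fun e he => by rw [if_neg he, mul_zero, zero_div, zero_mul], if_pos rfl,
    mul_one]

lemma qBinom_add_div_qFact (hq₀ : 0 ≤ q) (hq₁ : q < 1) (k l : ℕ) :
    qBinom q (k + l) l / qFact q (k + l) = (qFact q k)⁻¹ * (qFact q l)⁻¹ := by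
  have hk := (qPoch_pos hq₀ hq₁.le hq₁ k).ne'
  have hl := (qPoch_pos hq₀ hq₁.le hq₁ l).ne'
  have hkl := (qPoch_pos hq₀ hq₁.le hq₁ (k + l)).ne'
  have hq := (sub_pos.2 hq₁).ne'
  rw [qBinom, Nat.add_sub_cancel, qFact, qFact, qFact, pow_add]
  field_simp

lemma qConv_Gk_Gk (hq₀ : 0 < q) (hq₁ : q < 1) (hγ : γ ≠ 0) (k l : ℕ) (x : ℝ) :
    qConv q γ (Gk q γ k) (Gk q γ l) x = qBinom q (k + l) l * Gk q γ (k + l) x := by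
  have hbinom := qBinom_add_div_qFact hq₀.le hq₁ k l
  rw [qConv_Gk hq₀ hq₁ hγ, Gk_eq q γ l, iterate_qDeriv_const_mul, ← Function.iterate_add_apply,
    Gk]
  linear_combination (-(-1) ^ (k + l) * (qDeriv q)^[k + l] (uGamma q γ) x) * hbinom

end DualBasis

theorem stmt17_general (q γ : ℝ) (hq : q ∈ Set.Ioo (0 : ℝ) 1) (hγ : γ ≠ 0) :
    (∀ r k : ℕ, qMoment q γ r (Gk q γ k) = if r = k then 1 else 0) ∧
    (∀ k l : ℕ, qInt q γ (fun x => Gk q γ k x * x ^ l) =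
      if k = l then (q ^ (k * (k + 1) / 2))⁻¹ else 0) ∧
    (∀ k l : ℕ, ∀ x : ℝ, x ≠ 0 →
      qConv q γ (Gk q γ k) (Gk q γ l) x = qBinom q (k + l) l * Gk q γ (k + l) x) :=
  ⟨qMoment_Gk hq.1 hq.2 hγ, qInt_Gk_mul_pow hq.1 hq.2 hγ,
    fun k l x _ => qConv_Gk_Gk hq.1 hq.2 hγ k l x⟩

/-- The basis dual to monomials. -/
theorem stmt17 (q γ : ℝ) (hq : q ∈ Set.Ioo (0 : ℝ) 1) (hγ : γ ∈ Set.Ioo (0 : ℝ) 1) :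
    (∀ r k : ℕ, qMoment q γ r (Gk q γ k) = if r = k then 1 else 0) ∧
    (∀ k l : ℕ, qInt q γ (fun x => Gk q γ k x * x ^ l) =
      if k = l then (q ^ (k * (k + 1) / 2))⁻¹ else 0) ∧
    (∀ k l : ℕ, ∀ x : ℝ, x ≠ 0 →
      qConv q γ (Gk q γ k) (Gk q γ l) x = qBinom q (k + l) l * Gk q γ (k + l) x) :=
  stmt17_general q γ hq hγ.1.ne'
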